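/- Convergence argument in the proof of Theorem 5.3 (abstract real-sequence form). Let d ≥ 1 and a ≥ 1 be integers, let m : ℕ → ℕ satisfy m_{n+1} = m_n + d for all n ≥ a, and let l : ℕ → ℕ satisfy l_{n+1} = l_n + d·(n+1) for all n ≥ a with l_a ≥ 1. For each j ∈ {1,…,d} let τ_j ∈ [0,∞) and let (t_{s,j})_{s≥a} and (τ_{s,j})_{s≥a} be sequences in [0,∞) with lim_{s→∞} t_{s,j} = τ_j and lim_{s→∞} τ_{s,j} = τ_j. Let (V_n)_{n≥a} be a sequence of strictly positive reals such that for all n ≥ a: V_n·∏_{j=1}^d (t_{n+1,j})^{n+1} ≤ V_{n+1} ≤ V_n·( ∏_{i=1}^d (m_n+i) )·∏_{j=1}^d (τ_{n+1,j})^{n+1}. Then the sequence (V_n^{1/l_n})_{n≥a} converges and lim_{n→∞} V_n^{1/l_n} = ( ∏_{j=1}^d τ_j )^{1/d}. -/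

import Mathlib

open Filter Topology

/-!
This is a multiplicative Stolz–Cesàro argument. If `V (n + 1) / V n` is eventually at least
`c ^ (l (n + 1) - l n)`, then telescoping gives `V n ≥ C * c ^ l n` for some `C > 0`, and the factor
`C` disappears after taking `l n`-th roots; an upper bound is the same statement for `1 / V n`.
Here the increments of `l` are `d * (n + 1)`, so the hypotheses bound `V (n + 1) / V n` between
powers of the geometric means of the `t (n + 1) j` and of the `T (n + 1) j`, up to the factor
`∏ i, (m n + i) ≤ (m n + d) ^ d`. Its `d * (n + 1)`-th root is at most `(m n + d) ^ (1 / (n + 1))`,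
which tends to `1` by the same argument, because `m` is eventually an arithmetic progression.
-/

theorem tendsto_const_mul_rpow_rpow_inv {α : Type*} {f : Filter α} {l : α → ℝ} {C c : ℝ}
    (hl : Tendsto l f atTop) (hC : 0 < C) (hc : 0 < c) :
    Tendsto (fun x => (C * c ^ l x) ^ (l x)⁻¹) f (𝓝 c) := by
  have hroot : Tendsto (fun x => C ^ (l x)⁻¹ * c) f (𝓝 c) := by
    simpa only [Function.comp_def, Real.rpow_zero, one_mul] using
      ((Real.continuousAt_const_rpow hC.ne').tendsto.comp
        (tendsto_inv_atTop_zero.comp hl)).mul_const c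
  refine hroot.congr' ?_
  filter_upwards [hl.eventually_gt_atTop 0] with x hx
  rw [Real.mul_rpow hC.le (Real.rpow_nonneg hc.le _), Real.rpow_rpow_inv hc.le hx.ne']

section StolzCesaro

variable {V l : ℕ → ℝ} {b c : ℝ}

theorem exists_const_mul_rpow_le (hV : ∀ᶠ n in atTop, 0 < V n) (hc : 0 < c)
    (h : ∀ᶠ n in atTop, V n * c ^ (l (n + 1) - l n) ≤ V (n + 1)) :
    ∃ C > 0, ∀ᶠ n in atTop, C * c ^ l n ≤ V n := by
  obtain ⟨N, hN⟩ := eventually_atTop.1 (hV.and h)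
  have hcN : 0 < c ^ l N := Real.rpow_pos_of_pos hc _
  refine ⟨V N / c ^ l N, div_pos (hN N le_rfl).1 hcN, eventually_atTop.2 ⟨N, fun n hn => ?_⟩⟩
  induction n, hn using Nat.le_induction with
  | base => rw [div_mul_cancel₀ _ hcN.ne']
  | succ n hn ih =>
    calc V N / c ^ l N * c ^ l (n + 1)
        = V N / c ^ l N * c ^ l n * c ^ (l (n + 1) - l n) := by
          rw [mul_assoc, ← Real.rpow_add hc, add_sub_cancel]
      _ ≤ V n * c ^ (l (n + 1) - l n) := by gcongr
      _ ≤ V (n + 1) := (hN n hn).2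

theorem eventually_lt_rpow_inv_of_mul_rpow_le (hl : Tendsto l atTop atTop)
    (hV : ∀ᶠ n in atTop, 0 < V n) (hc : 0 < c) (hbc : b < c)
    (h : ∀ᶠ n in atTop, V n * c ^ (l (n + 1) - l n) ≤ V (n + 1)) :
    ∀ᶠ n in atTop, b < V n ^ (l n)⁻¹ := by
  obtain ⟨C, hC, hCV⟩ := exists_const_mul_rpow_le hV hc h
  filter_upwards [(tendsto_const_mul_rpow_rpow_inv hl hC hc).eventually_const_lt hbc, hCV,
    hl.eventually_ge_atTop 0] with n hb hn hl0
  exact hb.trans_le (Real.rpow_le_rpow (by positivity) hn (inv_nonneg.2 hl0))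

theorem eventually_rpow_inv_lt_of_le_mul_rpow (hl : Tendsto l atTop atTop)
    (hV : ∀ᶠ n in atTop, 0 < V n) (hc : 0 < c) (hcb : c < b)
    (h : ∀ᶠ n in atTop, V (n + 1) ≤ V n * c ^ (l (n + 1) - l n)) :
    ∀ᶠ n in atTop, V n ^ (l n)⁻¹ < b := by
  have hinv : ∀ᶠ n in atTop,
      (V n)⁻¹ * c⁻¹ ^ (l (n + 1) - l n) ≤ (V (n + 1))⁻¹ := by
    filter_upwards [(tendsto_add_atTop_nat 1).eventually hV, h] with n hn hle
    rw [Real.inv_rpow hc.le, ← mul_inv]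
    exact inv_anti₀ hn hle
  filter_upwards [hV, eventually_lt_rpow_inv_of_mul_rpow_le hl (hV.mono fun n => inv_pos.2)
    (inv_pos.2 hc) (inv_strictAnti₀ hc hcb) hinv] with n hn hlt
  rw [Real.inv_rpow hn.le] at hlt
  exact (inv_lt_inv₀ (hc.trans hcb) (Real.rpow_pos_of_pos hn _)).1 hlt

theorem tendsto_rpow_inv_of_rpow_le_of_le_rpow {p q : ℕ → ℝ} {L : ℝ}
    (hl : Tendsto l atTop atTop) (hl_mono : ∀ᶠ n in atTop, l n ≤ l (n + 1))
    (hV : ∀ᶠ n in atTop, 0 < V n) (hp : Tendsto p atTop (𝓝 L)) (hq : Tendsto q atTop (𝓝 L))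
    (hq_nonneg : ∀ᶠ n in atTop, 0 ≤ q n)
    (hlow : ∀ᶠ n in atTop, V n * p n ^ (l (n + 1) - l n) ≤ V (n + 1))
    (hup : ∀ᶠ n in atTop, V (n + 1) ≤ V n * q n ^ (l (n + 1) - l n)) :
    Tendsto (fun n => V n ^ (l n)⁻¹) atTop (𝓝 L) := by
  refine tendsto_order.2 ⟨fun b hb => ?_, fun b hb => ?_⟩
  · rcases lt_or_ge b 0 with hb0 | hb0
    · filter_upwards [hV] with n hn
      exact hb0.trans (Real.rpow_pos_of_pos hn _)
    obtain ⟨c, hbc, hcL⟩ := exists_between hb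
    have hc : 0 < c := hb0.trans_lt hbc
    refine eventually_lt_rpow_inv_of_mul_rpow_le hl hV hc hbc ?_
    filter_upwards [hV, hl_mono, hp.eventually_const_lt hcL, hlow] with n hn hmono hcp hle
    refine le_trans ?_ hle
    have := sub_nonneg.2 hmono
    gcongr
  · obtain ⟨c, hLc, hcb⟩ := exists_between hb
    have hc : 0 < c := (ge_of_tendsto hq hq_nonneg).trans_lt hLc
    refine eventually_rpow_inv_lt_of_le_mul_rpow hl hV hc hcb ?_
    filter_upwards [hV, hl_mono, hq.eventually_lt_const hLc, hq_nonneg, hup]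
      with n hn hmono hqc hq0 hle
    refine hle.trans ?_
    have := sub_nonneg.2 hmono
    gcongr

end StolzCesaro

theorem tendsto_atTop_of_eventually_lt_succ {u : ℕ → ℕ}
    (h : ∀ᶠ n in atTop, u n < u (n + 1)) : Tendsto u atTop atTop := by
  obtain ⟨N, hN⟩ := eventually_atTop.1 h
  have hmono : StrictMono fun n => u (n + N) := strictMono_nat_of_lt_succ fun n => by
    simpa only [add_right_comm] using hN (n + N) (Nat.le_add_left N n)
  exact (tendsto_add_atTop_iff_nat N).1 hmono.tendsto_atTop

theorem tendsto_rpow_inv_of_succ_eq_add {u : ℕ → ℝ} {r : ℝ} (hu : Tendsto u atTop atTop)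
    (h : ∀ᶠ n in atTop, u (n + 1) = u n + r) :
    Tendsto (fun n : ℕ => u n ^ ((n : ℝ) + 1)⁻¹) atTop (𝓝 1) := by
  have hratio : Tendsto (fun n => 1 + r / u n) atTop (𝓝 1) := by
    simpa only [add_zero] using (hu.const_div_atTop r).const_add 1
  have hstep : ∀ᶠ n in atTop, u (n + 1) =
      u n * (1 + r / u n) ^ (((n + 1 : ℕ) : ℝ) + 1 - ((n : ℝ) + 1)) := by
    filter_upwards [h, hu.eventually_gt_atTop 0] with n hn hpos
    rw [Nat.cast_succ, add_sub_cancel_left, Real.rpow_one, hn]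
    field_simp
  exact tendsto_rpow_inv_of_rpow_le_of_le_rpow
    (tendsto_atTop_add_const_right _ 1 tendsto_natCast_atTop_atTop)
    (Eventually.of_forall fun n => by gcongr; exact n.le_succ)
    (hu.eventually_gt_atTop 0) hratio hratio (hratio.eventually_const_le one_pos)
    (hstep.mono fun _ hn => hn.ge) (hstep.mono fun _ hn => hn.le)

theorem tendsto_natCast_add_rpow_inv_of_succ_eq_add {m : ℕ → ℕ} {d : ℕ} (hd : d ≠ 0)
    (h : ∀ᶠ n in atTop, m (n + 1) = m n + d) :
    Tendsto (fun n => ((m n : ℝ) + d) ^ ((n : ℝ) + 1)⁻¹) atTop (𝓝 1) := by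
  have hm : Tendsto m atTop atTop :=
    tendsto_atTop_of_eventually_lt_succ (h.mono fun n hn => by omega)
  exact tendsto_rpow_inv_of_succ_eq_add (r := d)
    (tendsto_atTop_add_const_right _ _ (tendsto_natCast_atTop_atTop.comp hm))
    (h.mono fun n hn => by rw [hn, Nat.cast_add])

theorem rpow_inv_natCast_rpow_mul {x : ℝ} (hx : 0 ≤ x) {d : ℕ} (hd : d ≠ 0) (k : ℕ) :
    (x ^ (d : ℝ)⁻¹) ^ ((d : ℝ) * k) = x ^ k := by
  rw [Real.rpow_mul (Real.rpow_nonneg hx _), Real.rpow_inv_rpow hx (Nat.cast_ne_zero.2 hd),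
    Real.rpow_natCast]

theorem prod_add_succ_le_pow {x : ℝ} (hx : 0 ≤ x) (d : ℕ) :
    ∏ i : Fin d, (x + (i : ℕ) + 1) ≤ (x + d) ^ d := by
  have hfactor (i : Fin d) : x + (i : ℕ) + 1 ≤ x + d := by
    rw [add_assoc]
    gcongr
    exact_mod_cast i.isLt
  simpa only [Finset.prod_const, Finset.card_univ, Fintype.card_fin] using
    Finset.prod_le_prod (s := Finset.univ) (fun i _ => by positivity) fun i _ => hfactor i

theorem prod_add_succ_mul_pow_le {x y : ℝ} (hx : 0 ≤ x) (hy : 0 ≤ y) {d : ℕ} (hd : d ≠ 0)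
    (n : ℕ) :
    (∏ i : Fin d, (x + (i : ℕ) + 1)) * y ^ (n + 1) ≤
      ((x + d) ^ ((n : ℝ) + 1)⁻¹ * y ^ (d : ℝ)⁻¹) ^ ((d : ℝ) * (n + 1 : ℕ)) := by
  have hroot : ((x + d) ^ ((n : ℝ) + 1)⁻¹) ^ ((d : ℝ) * (n + 1 : ℕ)) = (x + d) ^ d := by
    rw [← Nat.cast_succ, mul_comm]
    exact rpow_inv_natCast_rpow_mul (by positivity) n.succ_ne_zero d
  rw [Real.mul_rpow (by positivity) (by positivity), hroot, rpow_inv_natCast_rpow_mul hy hd]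
  gcongr
  exact prod_add_succ_le_pow hx d

theorem tendsto_rpow_inv_of_mul_pow_bounds {d : ℕ} (hd : d ≠ 0) {m l : ℕ → ℕ}
    (hm : ∀ᶠ n in atTop, m (n + 1) = m n + d)
    (hl : ∀ᶠ n in atTop, l (n + 1) = l n + d * (n + 1)) {V p q : ℕ → ℝ} {P : ℝ}
    (hV : ∀ᶠ n in atTop, 0 < V n) (hp_nonneg : ∀ᶠ n in atTop, 0 ≤ p n)
    (hq_nonneg : ∀ᶠ n in atTop, 0 ≤ q n) (hp : Tendsto p atTop (𝓝 P))
    (hq : Tendsto q atTop (𝓝 P)) (hlow : ∀ᶠ n in atTop, V n * p n ^ (n + 1) ≤ V (n + 1))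
    (hup : ∀ᶠ n in atTop, V (n + 1) ≤
      V n * (∏ i : Fin d, ((m n : ℝ) + (i : ℕ) + 1)) * q n ^ (n + 1)) :
    Tendsto (fun n => V n ^ (l n : ℝ)⁻¹) atTop (𝓝 (P ^ (d : ℝ)⁻¹)) := by
  have hd_inv : 0 ≤ (d : ℝ)⁻¹ := by positivity
  have hl_lt : ∀ᶠ n in atTop, l n < l (n + 1) :=
    hl.mono fun n hn => hn ▸ Nat.lt_add_of_pos_right (by positivity)
  have hincr : ∀ᶠ n in atTop, (l (n + 1) : ℝ) - l n = d * (n + 1 : ℕ) := hl.mono fun n hn => by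
    rw [hn, Nat.cast_add, Nat.cast_mul, add_sub_cancel_left]
  have hupper : Tendsto (fun n => ((m n : ℝ) + d) ^ ((n : ℝ) + 1)⁻¹ * q n ^ (d : ℝ)⁻¹) atTop
      (𝓝 (P ^ (d : ℝ)⁻¹)) := by
    simpa only [one_mul] using
      (tendsto_natCast_add_rpow_inv_of_succ_eq_add hd hm).mul (hq.rpow_const (.inr hd_inv))
  refine tendsto_rpow_inv_of_rpow_le_of_le_rpow
    (tendsto_natCast_atTop_atTop.comp (tendsto_atTop_of_eventually_lt_succ hl_lt))
    (hl_lt.mono fun n hn => Nat.cast_le.2 hn.le) hV (hp.rpow_const (.inr hd_inv)) hupper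
    (hq_nonneg.mono fun n hn => by positivity) ?_ ?_
  · filter_upwards [hincr, hp_nonneg, hlow] with n hincr_n hpn hn
    rwa [hincr_n, rpow_inv_natCast_rpow_mul hpn hd]
  · filter_upwards [hincr, hV, hq_nonneg, hup] with n hincr_n hVn hqn hn
    rw [mul_assoc] at hn
    rw [hincr_n]
    exact hn.trans <| mul_le_mul_of_nonneg_left
      (prod_add_succ_mul_pow_le (m n).cast_nonneg hqn hd n) hVn.le

/-- Convergence argument in the proof of Theorem 5.3 (abstract real-sequence form):
if `V_n·∏_j t_{n+1,j}^{n+1} ≤ V_{n+1} ≤ V_n·(∏_{i=1}^d (m_n+i))·∏_j τ_{n+1,j}^{n+1}` with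
`t_{s,j}, τ_{s,j} → τ_j`, `m_{n+1} = m_n + d` and `l_{n+1} = l_n + d(n+1)`, then
`V_n^{1/l_n} → (∏_j τ_j)^{1/d}`. -/
theorem thm_5_3_convergence (d a : ℕ) (hd : 1 ≤ d) (ha : 1 ≤ a)
    (m l : ℕ → ℕ)
    (hm : ∀ n, a ≤ n → m (n + 1) = m n + d)
    (hl : ∀ n, a ≤ n → l (n + 1) = l n + d * (n + 1))
    (hla : 1 ≤ l a)
    (τ : Fin d → ℝ) (hτ : ∀ j, 0 ≤ τ j)
    (t T : ℕ → Fin d → ℝ)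
    (ht0 : ∀ s, a ≤ s → ∀ j, 0 ≤ t s j)
    (hT0 : ∀ s, a ≤ s → ∀ j, 0 ≤ T s j)
    (htlim : ∀ j, Tendsto (fun s => t s j) atTop (𝓝 (τ j)))
    (hTlim : ∀ j, Tendsto (fun s => T s j) atTop (𝓝 (τ j)))
    (V : ℕ → ℝ) (hV : ∀ n, a ≤ n → 0 < V n)
    (hlow : ∀ n, a ≤ n → V n * ∏ j, t (n + 1) j ^ (n + 1) ≤ V (n + 1))
    (hup : ∀ n, a ≤ n → V (n + 1) ≤
      V n * (∏ i : Fin d, ((m n : ℝ) + (i : ℕ) + 1)) * ∏ j, T (n + 1) j ^ (n + 1)) :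
    Tendsto (fun n => V n ^ ((1 : ℝ) / (l n : ℝ))) atTop
      (𝓝 ((∏ j, τ j) ^ ((1 : ℝ) / (d : ℝ)))) := by
  have ha_le := eventually_ge_atTop a
  have hprod_nonneg {x : ℕ → Fin d → ℝ} (hx : ∀ s, a ≤ s → ∀ j, 0 ≤ x s j) :
      ∀ᶠ n in atTop, 0 ≤ ∏ j, x (n + 1) j :=
    ha_le.mono fun n hn => Finset.prod_nonneg fun j _ => hx (n + 1) (Nat.le_succ_of_le hn) j
  have hprod_lim {x : ℕ → Fin d → ℝ} (hx : ∀ j, Tendsto (fun s => x s j) atTop (𝓝 (τ j))) :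
      Tendsto (fun n => ∏ j, x (n + 1) j) atTop (𝓝 (∏ j, τ j)) :=
    (tendsto_finsetProd _ fun j _ => hx j).comp (tendsto_add_atTop_nat 1)
  simp only [Finset.prod_pow] at hlow hup
  simpa only [one_div] using tendsto_rpow_inv_of_mul_pow_bounds
    (Nat.one_le_iff_ne_zero.1 hd) (ha_le.mono hm) (ha_le.mono hl) (ha_le.mono hV)
    (hprod_nonneg ht0) (hprod_nonneg hT0) (hprod_lim htlim) (hprod_lim hTlim)
    (ha_le.mono hlow) (ha_le.mono hup)
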